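/- With the data and global duality hypothesis of the abstract Selmer setup, assume in addition that Sel(F∩G) is finite-dimensional over 𝔽_p. Then dim_{𝔽_p} Sel(F) − dim_{𝔽_p} Sel(G) ≡ Σ_{v∈S} dim_{𝔽_p} F_v/(F_v ∩ G_v) (mod 2). -/

import Mathlib

open Module Submodule

/-!
Let `b` be a symmetric form on `W = F ⊕ G` with `F` and `G` isotropic, let `π` be the projection
onto `F` along `G`, and let `C` be its own orthogonal complement. Since `C`, `F` and `G` are
isotropic, the form `(x, y) ↦ b (π x) y` is skew-symmetric on `C`; since `C` is even
self-orthogonal, its kernel is `(C ∩ F) ⊕ (C ∩ G)`. A skew-symmetric form has even rank, hence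
`dim C ≡ dim (C ∩ F) + dim (C ∩ G)` modulo 2. Take for `W` the sum of the `(F_v + G_v)/(F_v ∩ G_v)`,
for `F` and `G` the sums of the images of the `F_v` and of the `G_v`, and for `C` the image of
`Sel(F+G)`. Then `C ∩ F` and `C ∩ G` are `Sel(F)/Sel(F ∩ G)` and `Sel(G)/Sel(F ∩ G)`, while
`dim C = dim F` because both are self-orthogonal.
-/

section SkewForm

variable {K V : Type*} [Field K] [NeZero (2 : K)] [AddCommGroup V] [Module K V]
  [FiniteDimensional K V] {ω : LinearMap.BilinForm K V}

theorem even_finrank_of_skew_of_nondegenerate (hskew : ∀ x y, ω x y = -ω y x)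
    (hω : ω.Nondegenerate) : Even (finrank K V) := by
  let e := finBasis K V
  let M := LinearMap.BilinForm.toMatrix e ω
  have hM : M.det ≠ 0 := (LinearMap.BilinForm.nondegenerate_iff_det_ne_zero e).mp hω
  have hMt : M.transpose = -M := by
    ext i j
    simpa [M, LinearMap.BilinForm.toMatrix_apply] using hskew (e j) (e i)
  have hdet : M.det = (-1) ^ finrank K V * M.det := by
    calc
      M.det = (-M).det := by rw [← hMt, Matrix.det_transpose]
      _ = (-1) ^ finrank K V * M.det := by rw [Matrix.det_neg, Fintype.card_fin]
  by_contra hodd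
  rw [(Nat.not_even_iff_odd.mp hodd).neg_one_pow] at hdet
  have htwo : 2 * M.det = 0 := by linear_combination hdet
  exact mul_ne_zero two_ne_zero hM htwo

theorem finrank_modEq_finrank_ker_of_skew (hskew : ∀ x y, ω x y = -ω y x) :
    finrank K V ≡ finrank K (LinearMap.ker ω) [MOD 2] := by
  obtain ⟨W, hW⟩ := Submodule.exists_isCompl (LinearMap.ker ω)
  have hker : LinearMap.ker (ω.restrict W) = ⊥ := by
    have horth : ∀ x ∈ W, ∀ y ∈ LinearMap.ker ω, ω x y = 0 := fun x _ y hy ↦ by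
      rw [hskew, LinearMap.mem_ker.mp hy, LinearMap.zero_apply, neg_zero]
    rw [LinearMap.BilinForm.ker_restrict_eq_of_codisjoint hW.symm.codisjoint horth,
      ← disjoint_iff_comap_eq_bot]
    exact hW.symm.disjoint
  have hskewW : ∀ x y, ω.restrict W x y = -ω.restrict W y x := fun x y ↦ hskew x y
  have hleft : ∀ x, (∀ y, ω.restrict W x y = 0) → x = 0 := fun x hx ↦
    (Submodule.eq_bot_iff _).mp hker x (LinearMap.ext hx)
  have hnondeg : (ω.restrict W).Nondegenerate :=
    ⟨hleft, fun y hy ↦ hleft y fun x ↦ by rw [hskewW, hy, neg_zero]⟩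
  obtain ⟨k, hk⟩ := even_finrank_of_skew_of_nondegenerate hskewW hnondeg
  have hadd := finrank_add_eq_of_isCompl hW
  unfold Nat.ModEq
  omega

end SkewForm

section ProjectionForm

variable {R V : Type*} [CommRing R] [AddCommGroup V] [Module R V] {b : LinearMap.BilinForm R V}
  {C F G : Submodule R V}

/-- The form `(x, y) ↦ b (π x) y` on `C`, where `π` is the projection onto `F` along `G`; it
measures how far `C` is from being the sum of `C ⊓ F` and `C ⊓ G`. -/
noncomputable def projectionForm (b : LinearMap.BilinForm R V) (h : IsCompl F G)
    (C : Submodule R V) : LinearMap.BilinForm R C :=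
  LinearMap.BilinForm.restrict (b ∘ₗ F.projection G h) C

theorem projectionForm_apply (h : IsCompl F G) (x y : C) :
    projectionForm b h C x y = b (F.projection G h x) y :=
  rfl

theorem projectionForm_skew (hb : b.IsSymm) (h : IsCompl F G) (hC : C ≤ b.orthogonal C)
    (hF : F ≤ b.orthogonal F) (hG : G ≤ b.orthogonal G) (x y : C) :
    projectionForm b h C x y = -projectionForm b h C y x := by
  let π := F.projection G h
  have hxy : b x y = 0 := hC y.2 x x.2
  have hFxy : b (π x) (π y) = 0 :=
    hF (projection_apply_mem h _) _ (projection_apply_mem h _)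
  have hGxy : b (x - π x) (y - π y) = 0 :=
    hG (sub_projection_mem h _) _ (sub_projection_mem h _)
  have hsymm : b (π y) x = b x (π y) := hb.eq _ _
  simp only [map_sub, LinearMap.sub_apply] at hGxy
  rw [projectionForm_apply, projectionForm_apply]
  linear_combination hxy + hFxy - hGxy + hsymm

theorem ker_projectionForm (hb : b.IsSymm) (h : IsCompl F G) (hC : b.orthogonal C = C) :
    LinearMap.ker (projectionForm b h C) = (C ⊓ F ⊔ C ⊓ G).comap C.subtype := by
  ext x
  have mem_ker_iff : x ∈ LinearMap.ker (projectionForm b h C) ↔ F.projection G h x ∈ C := by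
    have mem_iff (y : V) : y ∈ C ↔ ∀ c ∈ C, b c y = 0 := by
      rw [← LinearMap.BilinForm.mem_orthogonal_iff, hC]
    rw [mem_iff]
    simp only [LinearMap.mem_ker, LinearMap.ext_iff, Subtype.forall,
      projectionForm_apply, LinearMap.zero_apply, hb.eq (F.projection G h x)]
  rw [mem_ker_iff, mem_comap, subtype_apply]
  constructor
  · intro hx
    rw [← add_sub_cancel (F.projection G h x) (x : V)]
    exact add_mem_sup ⟨hx, projection_apply_mem h _⟩ ⟨C.sub_mem x.2 hx, sub_projection_mem h _⟩
  · intro hx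
    obtain ⟨f, hf, g, hg, hfg⟩ := mem_sup.mp hx
    rw [← hfg, map_add, projection_apply_of_mem_left h hf.2,
      (projection_apply_eq_zero_iff h).mpr hg.2, add_zero]
    exact hf.1

end ProjectionForm

section Lagrangian

variable {K V : Type*} [Field K] [AddCommGroup V] [Module K V] {b : LinearMap.BilinForm K V}
  {C F G : Submodule K V}

theorem finrank_eq_of_orthogonal_eq_self [FiniteDimensional K V] (hb : b.IsRefl)
    (hF : b.orthogonal F = F) (hG : b.orthogonal G = G) : finrank K F = finrank K G := by
  have radical_le {N : Submodule K V} (hN : b.orthogonal N = N) : b.orthogonal ⊤ ≤ N :=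
    (LinearMap.BilinForm.orthogonal_le le_top).trans_eq hN
  have hF' := LinearMap.BilinForm.finrank_add_finrank_orthogonal hb F
  have hG' := LinearMap.BilinForm.finrank_add_finrank_orthogonal hb G
  rw [hF, inf_eq_right.mpr (radical_le hF)] at hF'
  rw [hG, inf_eq_right.mpr (radical_le hG)] at hG'
  omega

theorem finrank_modEq_finrank_inf_add_finrank_inf [NeZero (2 : K)] [FiniteDimensional K C]
    (hb : b.IsSymm) (h : IsCompl F G) (hC : b.orthogonal C = C) (hF : F ≤ b.orthogonal F)
    (hG : G ≤ b.orthogonal G) :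
    finrank K C ≡ finrank K ↥(C ⊓ F) + finrank K ↥(C ⊓ G) [MOD 2] := by
  have hparity := finrank_modEq_finrank_ker_of_skew (projectionForm_skew hb h hC.ge hF hG)
  have hdisj : (C ⊓ F) ⊓ (C ⊓ G) = ⊥ :=
    (h.disjoint.mono inf_le_right inf_le_right).eq_bot
  rwa [ker_projectionForm hb h hC,
    (comapSubtypeEquivOfLe (sup_le inf_le_left inf_le_left)).finrank_eq,
    ← add_zero (finrank K ↥(C ⊓ F ⊔ C ⊓ G)), ← finrank_bot K V, ← hdisj,
    finrank_sup_add_finrank_inf_eq] at hparity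

variable {X : Type*} [AddCommGroup X] [Module K X]

theorem finrank_comap_eq_finrank_ker_add (f : X →ₗ[K] V) [FiniteDimensional K (LinearMap.ker f)]
    (P : Submodule K V) [FiniteDimensional K ↥(LinearMap.range f ⊓ P)] :
    finrank K (P.comap f) = finrank K (LinearMap.ker f) + finrank K ↥(LinearMap.range f ⊓ P) := by
  let g := f.domRestrict (P.comap f)
  have hrange : LinearMap.range g = LinearMap.range f ⊓ P := by
    rw [LinearMap.range_domRestrict, map_comap_eq]
  let ekerg : LinearMap.ker g ≃ₗ[K] LinearMap.ker f :=
    (LinearEquiv.ofEq _ _ (LinearMap.ker_domRestrict _ f)).trans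
      (comapSubtypeEquivOfLe (LinearMap.ker_le_comap f))
  have : Module.Finite K (LinearMap.ker g) := Module.Finite.equiv ekerg.symm
  have : Module.Finite K (P.comap f ⧸ LinearMap.ker g) :=
    Module.Finite.equiv (g.quotKerEquivRange.trans (LinearEquiv.ofEq _ _ hrange)).symm
  have : Module.Finite K (P.comap f) := .of_submodule_quotient (LinearMap.ker g)
  rw [← LinearMap.finrank_range_add_finrank_ker g, hrange, ekerg.finrank_eq, add_comm]

theorem finrank_comap_sub_finrank_comap_modEq [NeZero (2 : K)] [FiniteDimensional K V]
    (hb : b.IsSymm) (h : IsCompl F G) (hF : b.orthogonal F = F) (hG : G ≤ b.orthogonal G)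
    (f : X →ₗ[K] V) [FiniteDimensional K (LinearMap.ker f)]
    (hf : b.orthogonal (LinearMap.range f) = LinearMap.range f) :
    (finrank K (F.comap f) : ℤ) - finrank K (G.comap f) ≡ finrank K F [ZMOD 2] := by
  have hparity := finrank_modEq_finrank_inf_add_finrank_inf hb h hf hF.ge hG
  rw [finrank_eq_of_orthogonal_eq_self hb.isRefl hf hF] at hparity
  rw [finrank_comap_eq_finrank_ker_add, finrank_comap_eq_finrank_ker_add]
  unfold Nat.ModEq at hparity
  unfold Int.ModEq
  omega

end Lagrangian

section Pi

variable {ι : Type*}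

theorem isCompl_pi_univ {R : Type*} [Ring R] {M : ι → Type*} [∀ v, AddCommGroup (M v)]
    [∀ v, Module R (M v)] {P Q : ∀ v, Submodule R (M v)} (h : ∀ v, IsCompl (P v) (Q v)) :
    IsCompl (pi Set.univ P) (pi Set.univ Q) := by
  refine ⟨disjoint_def.mpr fun x hP hQ ↦ funext fun v ↦ ?_,
    codisjoint_iff_exists_add_eq.mpr fun x ↦ ?_⟩
  · exact disjoint_def.mp (h v).disjoint (x v) (hP v trivial) (hQ v trivial)
  · choose y z hy hz hyz using fun v ↦ codisjoint_iff_exists_add_eq.mp (h v).codisjoint (x v)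
    exact ⟨y, z, fun v _ ↦ hy v, fun v _ ↦ hz v, funext hyz⟩

theorem isSymm_of_eq_sum [Fintype ι] {R : Type*} [CommRing R] {M : ι → Type*}
    [∀ v, AddCommGroup (M v)] [∀ v, Module R (M v)] {B : LinearMap.BilinForm R (∀ v, M v)}
    {b : ∀ v, LinearMap.BilinForm R (M v)} (hB : ∀ x y, B x y = ∑ v, b v (x v) (y v))
    (hb : ∀ v, (b v).IsSymm) : B.IsSymm :=
  ⟨fun x y ↦ by simp only [hB, fun v ↦ (hb v).eq (x v)]⟩

theorem orthogonal_pi_univ [Fintype ι] {R : Type*} [CommRing R] {M : ι → Type*}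
    [∀ v, AddCommGroup (M v)] [∀ v, Module R (M v)] {B : LinearMap.BilinForm R (∀ v, M v)}
    {b : ∀ v, LinearMap.BilinForm R (M v)} (hB : ∀ x y, B x y = ∑ v, b v (x v) (y v))
    (P : ∀ v, Submodule R (M v)) :
    B.orthogonal (pi Set.univ P) = pi Set.univ fun v ↦ (b v).orthogonal (P v) := by
  classical
  ext y
  simp only [mem_pi, LinearMap.BilinForm.mem_orthogonal_iff, Set.mem_univ, true_imp_iff]
  constructor
  · intro hy v x hx
    have hsingle : ∑ w, b w ((Pi.single v x : ∀ w, M w) w) (y w) = b v x (y v) := by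
      rw [Finset.sum_eq_single_of_mem v (Finset.mem_univ v) fun w _ hw ↦ by
        rw [Pi.single_eq_of_ne hw, map_zero, LinearMap.zero_apply], Pi.single_eq_same]
    rw [← hsingle, ← hB]
    exact hy _ fun w ↦ le_comap_single_pi P (I := Set.univ) hx w trivial
  · intro hy x hx
    rw [hB]
    exact Finset.sum_eq_zero fun v _ ↦ hy v (x v) (hx v)

theorem finrank_pi_univ [Fintype ι] {K : Type*} [Field K] {M : ι → Type*}
    [∀ v, AddCommGroup (M v)] [∀ v, Module K (M v)] (P : ∀ v, Submodule K (M v))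
    [∀ v, FiniteDimensional K (P v)] :
    finrank K (pi Set.univ P) = ∑ v, finrank K (P v) := by
  let incl : (∀ v, P v) →ₗ[K] ∀ v, M v := LinearMap.piMap fun v ↦ (P v).subtype
  have hinj : Function.Injective incl := fun x y hxy ↦
    funext fun v ↦ Subtype.ext (congrFun hxy v)
  have hrange : LinearMap.range incl = pi Set.univ P := by
    ext x
    exact ⟨fun ⟨y, hy⟩ v _ ↦ hy ▸ (y v).2, fun hx ↦ ⟨fun v ↦ ⟨x v, hx v trivial⟩, rfl⟩⟩
  rw [← hrange, LinearMap.finrank_range_of_inj hinj, finrank_pi_fintype]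

end Pi

section Subquotient

variable {R M : Type*} [Ring R] [AddCommGroup M] [Module R M]

/-- The image of `N ∩ A` in the subquotient `A / (A ∩ P)` of `M`. -/
def subquotientImage (A P N : Submodule R M) : Submodule R (A ⧸ P.comap A.subtype) :=
  (N.comap A.subtype).map (P.comap A.subtype).mkQ

variable {A P N : Submodule R M}

theorem mk_mem_subquotientImage (h : P ≤ N) (x : A) :
    Submodule.Quotient.mk x ∈ subquotientImage A P N ↔ (x : M) ∈ N := by
  change x ∈ (subquotientImage A P N).comap (P.comap A.subtype).mkQ ↔ _
  rw [subquotientImage, comap_map_mkQ, sup_eq_right.mpr (comap_mono h), mem_comap, subtype_apply]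

theorem subquotientImage_self : subquotientImage A P P = ⊥ :=
  mkQ_map_self _

theorem isCompl_subquotientImage (F G : Submodule R M) :
    IsCompl (subquotientImage (F ⊔ G) (F ⊓ G) F) (subquotientImage (F ⊔ G) (F ⊓ G) G) := by
  refine ⟨disjoint_def.mpr fun x hF hG ↦ ?_, codisjoint_iff_exists_add_eq.mpr fun x ↦ ?_⟩
  all_goals obtain ⟨a, rfl⟩ := Submodule.Quotient.mk_surjective _ x
  · rw [mk_mem_subquotientImage inf_le_left] at hF
    rw [mk_mem_subquotientImage inf_le_right] at hG
    exact (Submodule.Quotient.mk_eq_zero _).mpr ⟨hF, hG⟩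
  · obtain ⟨f, hf, g, hg, hfg⟩ := mem_sup.mp a.2
    refine ⟨Submodule.Quotient.mk ⟨f, mem_sup_left hf⟩, Submodule.Quotient.mk ⟨g, mem_sup_right hg⟩,
      (mk_mem_subquotientImage inf_le_left _).mpr hf,
      (mk_mem_subquotientImage inf_le_right _).mpr hg, ?_⟩
    rw [← Submodule.Quotient.mk_add]
    exact congrArg _ (Subtype.ext hfg)

theorem finrank_subquotientImage (hNA : N ≤ A) :
    finrank R (subquotientImage A P N) = finrank R (N ⧸ P.comap N.subtype) := by
  let f : N →ₗ[R] A ⧸ P.comap A.subtype := (P.comap A.subtype).mkQ ∘ₗ inclusion hNA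
  have hker : LinearMap.ker f = P.comap N.subtype := by
    rw [LinearMap.ker_comp, ker_mkQ, ← comap_comp, subtype_comp_inclusion]
  have hrange : LinearMap.range f = subquotientImage A P N := by
    rw [LinearMap.range_comp, range_inclusion, subquotientImage]
  rw [← hrange, ← hker, f.quotKerEquivRange.finrank_eq]

end Subquotient

section SubquotientForm

variable {R M : Type*} [CommRing R] [AddCommGroup M] [Module R M] {A P N : Submodule R M}
  {β : LinearMap.BilinForm R M} {βbar : LinearMap.BilinForm R (A ⧸ P.comap A.subtype)}

theorem isSymm_of_mk_eq
    (hβbar : ∀ x y : A, βbar (Submodule.Quotient.mk x) (Submodule.Quotient.mk y) = β x y)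
    (hβ : β.IsSymm) : βbar.IsSymm := by
  refine ⟨fun x y ↦ ?_⟩
  obtain ⟨a, rfl⟩ := Submodule.Quotient.mk_surjective _ x
  obtain ⟨b, rfl⟩ := Submodule.Quotient.mk_surjective _ y
  rw [hβbar, hβbar, hβ.eq]

theorem orthogonal_subquotientImage
    (hβbar : ∀ x y : A, βbar (Submodule.Quotient.mk x) (Submodule.Quotient.mk y) = β x y)
    (hPN : P ≤ N) (hNA : N ≤ A) (hN : P ≤ β.orthogonal N) :
    βbar.orthogonal (subquotientImage A P N) = subquotientImage A P (β.orthogonal N) := by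
  ext y
  obtain ⟨a, rfl⟩ := Submodule.Quotient.mk_surjective _ y
  rw [mk_mem_subquotientImage hN, LinearMap.BilinForm.mem_orthogonal_iff,
    LinearMap.BilinForm.mem_orthogonal_iff]
  constructor
  · intro h n hn
    rw [← hβbar ⟨n, hNA hn⟩ a]
    exact h _ ((mk_mem_subquotientImage hPN _).mpr hn)
  · intro h x hx
    obtain ⟨n, rfl⟩ := Submodule.Quotient.mk_surjective _ x
    rw [hβbar]
    exact h n ((mk_mem_subquotientImage hPN n).mp hx)

end SubquotientForm

section Selmer

variable {ι R H : Type*} {B : ι → Type*} [Ring R] [AddCommGroup H] [Module R H]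
  [∀ v, AddCommGroup (B v)] [∀ v, Module R (B v)]

/-- The Selmer group `Sel(D)` of the local conditions `D v`: the classes in `H` whose localization
at every `v` lies in `D v`. -/
def selmerGroup (loc : ∀ v, H →ₗ[R] B v) (D : ∀ v, Submodule R (B v)) : Submodule R H :=
  ⨅ v, (D v).comap (loc v)

theorem mem_selmerGroup {loc : ∀ v, H →ₗ[R] B v} {D : ∀ v, Submodule R (B v)} {x : H} :
    x ∈ selmerGroup loc D ↔ ∀ v, loc v x ∈ D v := by
  simp only [selmerGroup, mem_iInf, mem_comap]

theorem selmerGroup_mono (loc : ∀ v, H →ₗ[R] B v) {D E : ∀ v, Submodule R (B v)}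
    (h : ∀ v, D v ≤ E v) : selmerGroup loc D ≤ selmerGroup loc E :=
  iInf_mono fun v ↦ comap_mono (h v)

variable {loc : ∀ v, H →ₗ[R] B v} {A P N : ∀ v, Submodule R (B v)}
  {φ : selmerGroup loc A →ₗ[R] ∀ v, A v ⧸ (P v).comap (A v).subtype}

theorem comap_pi_subquotientImage
    (hφ : ∀ x v, φ x v = Submodule.Quotient.mk ⟨loc v x, mem_selmerGroup.mp x.2 v⟩)
    (h : ∀ v, P v ≤ N v) :
    (pi Set.univ fun v ↦ subquotientImage (A v) (P v) (N v)).comap φ =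
      (selmerGroup loc N).comap (selmerGroup loc A).subtype := by
  ext x
  simp only [mem_comap, mem_pi, Set.mem_univ, true_imp_iff, hφ, mk_mem_subquotientImage (h _),
    subtype_apply, mem_selmerGroup]

theorem finrank_comap_pi_subquotientImage
    (hφ : ∀ x v, φ x v = Submodule.Quotient.mk ⟨loc v x, mem_selmerGroup.mp x.2 v⟩)
    (hPN : ∀ v, P v ≤ N v) (hNA : ∀ v, N v ≤ A v) :
    finrank R ((pi Set.univ fun v ↦ subquotientImage (A v) (P v) (N v)).comap φ) =
      finrank R (selmerGroup loc N) := by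
  rw [comap_pi_subquotientImage hφ hPN]
  exact (comapSubtypeEquivOfLe (selmerGroup_mono loc hNA)).finrank_eq

theorem ker_localization
    (hφ : ∀ x v, φ x v = Submodule.Quotient.mk ⟨loc v x, mem_selmerGroup.mp x.2 v⟩) :
    LinearMap.ker φ = (selmerGroup loc P).comap (selmerGroup loc A).subtype := by
  rw [← comap_pi_subquotientImage hφ fun _ ↦ le_rfl]
  simp only [subquotientImage_self, pi_univ_bot, LinearMap.ker]

end Selmer

theorem stmt_3_general {ι K H : Type*} [Fintype ι] [Field K] [NeZero (2 : K)]
    {B : ι → Type*} [∀ v, AddCommGroup (B v)] [∀ v, Module K (B v)]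
    [AddCommGroup H] [Module K H]
    (β : ∀ v, LinearMap.BilinForm K (B v)) (hβ : ∀ v, (β v).IsSymm)
    (F G : ∀ v, Submodule K (B v))
    [∀ v, FiniteDimensional K (↥(F v ⊔ G v) ⧸ (F v ⊓ G v).comap (F v ⊔ G v).subtype)]
    (hF : ∀ v, (β v).orthogonal (F v) = F v) (hG : ∀ v, (β v).orthogonal (G v) = G v)
    (loc : ∀ v, H →ₗ[K] B v)
    (βbar : ∀ v, LinearMap.BilinForm K (↥(F v ⊔ G v) ⧸ (F v ⊓ G v).comap (F v ⊔ G v).subtype))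
    (hβbar : ∀ v (x y : ↥(F v ⊔ G v)),
      βbar v (Submodule.Quotient.mk x) (Submodule.Quotient.mk y) = β v x y)
    (φ : selmerGroup loc (fun v ↦ F v ⊔ G v) →ₗ[K]
      ∀ v, ↥(F v ⊔ G v) ⧸ (F v ⊓ G v).comap (F v ⊔ G v).subtype)
    (hφ : ∀ x v, φ x v = Submodule.Quotient.mk ⟨loc v x, mem_selmerGroup.mp x.2 v⟩)
    (βtot : LinearMap.BilinForm K
      (∀ v, ↥(F v ⊔ G v) ⧸ (F v ⊓ G v).comap (F v ⊔ G v).subtype))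
    (hβtot : ∀ x y, βtot x y = ∑ v, βbar v (x v) (y v))
    (hdual : βtot.orthogonal (LinearMap.range φ) = LinearMap.range φ)
    [FiniteDimensional K (selmerGroup loc fun v ↦ F v ⊓ G v)] :
    (finrank K (selmerGroup loc F) : ℤ) - finrank K (selmerGroup loc G) ≡
      ∑ v, (finrank K (F v ⧸ (F v ⊓ G v).comap (F v).subtype) : ℤ) [ZMOD 2] := by
  have hsymm : βtot.IsSymm :=
    isSymm_of_eq_sum hβtot fun v ↦ isSymm_of_mk_eq (hβbar v) (hβ v)
  let localImage (N : ∀ v, Submodule K (B v)) (v : ι) :=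
    subquotientImage (F v ⊔ G v) (F v ⊓ G v) (N v)
  have self_orthogonal {N : ∀ v, Submodule K (B v)} (hN : ∀ v, (β v).orthogonal (N v) = N v)
      (hPN : ∀ v, F v ⊓ G v ≤ N v) (hNA : ∀ v, N v ≤ F v ⊔ G v) :
      βtot.orthogonal (pi Set.univ (localImage N)) = pi Set.univ (localImage N) := by
    rw [orthogonal_pi_univ hβtot]
    refine congrArg _ (funext fun v ↦ ?_)
    rw [orthogonal_subquotientImage (hβbar v) (hPN v) (hNA v) ((hPN v).trans_eq (hN v).symm), hN]
  have hcompl : IsCompl (pi Set.univ (localImage F)) (pi Set.univ (localImage G)) :=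
    isCompl_pi_univ fun v ↦ isCompl_subquotientImage (F v) (G v)
  have : FiniteDimensional K (LinearMap.ker φ) := by
    rw [ker_localization hφ]
    exact Module.Finite.equiv
      (comapSubtypeEquivOfLe (selmerGroup_mono loc fun _ ↦ inf_le_sup)).symm
  have hparity := finrank_comap_sub_finrank_comap_modEq hsymm hcompl
    (self_orthogonal hF (fun _ ↦ inf_le_left) fun _ ↦ le_sup_left)
    (self_orthogonal hG (fun _ ↦ inf_le_right) fun _ ↦ le_sup_right).ge φ hdual
  rw [finrank_comap_pi_subquotientImage hφ (fun _ ↦ inf_le_left) fun _ ↦ le_sup_left,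
    finrank_comap_pi_subquotientImage hφ (fun _ ↦ inf_le_right) fun _ ↦ le_sup_right,
    finrank_pi_univ, Nat.cast_sum] at hparity
  have hlocal v : finrank K (localImage F v) = finrank K (F v ⧸ (F v ⊓ G v).comap (F v).subtype) :=
    finrank_subquotientImage le_sup_left
  simpa only [hlocal] using hparity

/-- Abstract Selmer setup with global duality: if `Sel(F∩G)` is
finite-dimensional, then `dim Sel(F) − dim Sel(G) ≡ Σ_{v∈S} dim F_v/(F_v ∩ G_v) (mod 2)`. -/
theorem stmt_3
    (p : ℕ) [Fact p.Prime] (hodd : Odd p)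
    (ι : Type) [Fintype ι]
    (B : ι → Type) [∀ v, AddCommGroup (B v)] [∀ v, Module (ZMod p) (B v)]
    [∀ v, FiniteDimensional (ZMod p) (B v)]
    (β : ∀ v, LinearMap.BilinForm (ZMod p) (B v))
    (hβsymm : ∀ v (x y : B v), β v x y = β v y x)
    (hβnd : ∀ v, (β v).Nondegenerate)
    (F G : ∀ v, Submodule (ZMod p) (B v))
    (hF : ∀ v, (β v).orthogonal (F v) = F v)
    (hG : ∀ v, (β v).orthogonal (G v) = G v)
    (H : Type) [AddCommGroup H] [Module (ZMod p) H]
    (loc : ∀ v, H →ₗ[ZMod p] B v)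
    -- the forms induced by the `β v` on the quotients `(F_v + G_v)/(F_v ∩ G_v)`
    (βbar : ∀ v, LinearMap.BilinForm (ZMod p)
      (↥(F v ⊔ G v) ⧸ Submodule.comap (F v ⊔ G v).subtype (F v ⊓ G v)))
    (hβbar : ∀ v (x y : ↥(F v ⊔ G v)),
      βbar v (Submodule.Quotient.mk x) (Submodule.Quotient.mk y) = β v x y)
    -- the localization map `φ : Sel(F+G) → B̄ = ⊕_v (F_v + G_v)/(F_v ∩ G_v)`
    (φ : ↥(⨅ v, Submodule.comap (loc v) (F v ⊔ G v)) →ₗ[ZMod p]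
      ∀ v, ↥(F v ⊔ G v) ⧸ Submodule.comap (F v ⊔ G v).subtype (F v ⊓ G v))
    (hφ : ∀ x v, φ x v = Submodule.Quotient.mk
      ⟨loc v x, by exact (Submodule.mem_iInf _).mp x.2 v⟩)
    -- the orthogonal direct-sum form on `B̄`
    (βtot : LinearMap.BilinForm (ZMod p)
      (∀ v, ↥(F v ⊔ G v) ⧸ Submodule.comap (F v ⊔ G v).subtype (F v ⊓ G v)))
    (hβtot : ∀ x y, βtot x y = ∑ v, βbar v (x v) (y v))
    -- global duality hypothesis: the image `C` of `Sel(F+G)` in `B̄` is its own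
    -- orthogonal complement
    (hdual : βtot.orthogonal (LinearMap.range φ) = LinearMap.range φ)
    -- `Sel(F∩G)` is finite-dimensional
    (hfin : FiniteDimensional (ZMod p) ↥(⨅ v, Submodule.comap (loc v) (F v ⊓ G v))) :
    (finrank (ZMod p) ↥(⨅ v, Submodule.comap (loc v) (F v)) : ℤ) -
      (finrank (ZMod p) ↥(⨅ v, Submodule.comap (loc v) (G v)) : ℤ) ≡
    ∑ v, (finrank (ZMod p)
        (↥(F v) ⧸ Submodule.comap (F v).subtype (F v ⊓ G v)) : ℤ) [ZMOD 2] := by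
  have hchar : ringChar (ZMod p) ≠ 2 :=
    (ZMod.ringChar_zmod_n p).trans_ne (hodd.ne_two_of_dvd_nat dvd_rfl)
  have : NeZero (2 : ZMod p) := ⟨Ring.two_ne_zero hchar⟩
  have : FiniteDimensional (ZMod p) (selmerGroup loc fun v ↦ F v ⊓ G v) := hfin
  exact stmt_3_general β (fun v ↦ ⟨hβsymm v⟩) F G hF hG loc βbar hβbar φ hφ βtot hβtot hdual
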